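/- arXiv:1607.03393 — 13 statements merged into one kernel-verified Lean document; each statement's English description precedes it below -/
import Mathlib

section
/- Let R(x,y) = (α_x(y), β_y(x)) be a non-degenerate YBE solution on a set X. Then the map R'(x,y) := (y, α_y(β_{α_x⁻¹(y)}(x))), where α_x⁻¹ denotes the inverse of the bijection α_x, is a bijection of X × X and is a YBE solution on X (the derived solution of R). -/
/-- The map acting as `R` on the first two coordinates of `X × X × X` (i.e. `R × id_X`). -/
def Rfst {X : Type*} (R : X × X → X × X) : X × X × X → X × X × X :=
  fun p => ((R (p.1, p.2.1)).1, (R (p.1, p.2.1)).2, p.2.2)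

/-- The map acting as `R` on the last two coordinates of `X × X × X` (i.e. `id_X × R`). -/
def Rsnd {X : Type*} (R : X × X → X × X) : X × X × X → X × X × X :=
  fun p => (p.1, R p.2)

/-- The braid relation `(R × id) ∘ (id × R) ∘ (R × id) = (id × R) ∘ (R × id) ∘ (id × R)`. -/
def IsBraided {X : Type*} (R : X × X → X × X) : Prop :=
  Rfst R ∘ Rsnd R ∘ Rfst R = Rsnd R ∘ Rfst R ∘ Rsnd R

/-- The map `R(x, y) = (α_x(y), β_y(x))`. -/
def YBEform {X : Type*} (α β : X → X → X) : X × X → X × X :=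
  fun p => (α p.1 p.2, β p.2 p.1)


/-- The derived solution `R'(x,y) = (y, α_y(β_{α_x⁻¹(y)}(x)))`. -/
def derivedMap {X : Type*} (α β αinv : X → X → X) : X × X → X × X :=
  fun p => (p.2, α p.2 (β (αinv p.1 p.2) p.1))

theorem stmt4 {X : Type*} (α β αinv : X → X → X)
    (hbij : Function.Bijective (YBEform α β))
    (hYB : IsBraided (YBEform α β))
    (hα : ∀ x, Function.Bijective (α x)) (hβ : ∀ x, Function.Bijective (β x))
    (hinv : ∀ x, Function.LeftInverse (αinv x) (α x) ∧
      Function.RightInverse (αinv x) (α x)) :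
    Function.Bijective (derivedMap α β αinv) ∧ IsBraided (derivedMap α β αinv) := by
  have hl : ∀ x y, αinv x (α x y) = y := fun x y => (hinv x).1 y
  have hr : ∀ x y, α x (αinv x y) = y := fun x y => (hinv x).2 y
  have e : ∀ x y z, _ := fun x y z => congrFun hYB (x, y, z)
  simp only [Rfst, Rsnd, YBEform, Function.comp, Prod.mk.injEq] at e
  have h1 : ∀ x y z, α (α x y) (α (β y x) z) = α x (α y z) := fun x y z => (e x y z).1
  have h2 : ∀ x y z, β (α (β y x) z) (α x y) = α (β (α y z) x) (β z y) :=
    fun x y z => (e x y z).2.1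
  have hS : ∀ x t, derivedMap α β αinv (x, α x t) = (α x t, α (α x t) (β t x)) := by
    intro x t
    simp only [derivedMap, hl]
  have haut : ∀ u x t, α u (α (α x t) (β t x)) =
      α (α u (α x t)) (β (αinv (α u x) (α u (α x t))) (α u x)) := by
    intro u x t
    have : αinv (α u x) (α u (α x t)) = α (β x u) t := by rw [← h1, hl]
    rw [this, h2, h1]
  constructor
  · constructor
    · rintro ⟨x, y⟩ ⟨x', y'⟩ h
      simp only [derivedMap, Prod.mk.injEq] at h
      obtain ⟨rfl, h⟩ := h
      have h' := (hα y).1 h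
      have : YBEform α β (x, αinv x y) = YBEform α β (x', αinv x' y) := by
        simp only [YBEform, hr, h']
      have := hbij.1 this
      simp only [Prod.mk.injEq] at this
      rw [this.1]
    · rintro ⟨y, z⟩
      obtain ⟨⟨x, t⟩, h⟩ := hbij.2 (y, αinv y z)
      simp only [YBEform, Prod.mk.injEq] at h
      refine ⟨(x, y), ?_⟩
      rw [← h.1, hS, h.1, h.2, hr]
  · let J : X × X × X → X × X × X := fun p => (p.1, α p.1 p.2.1, α p.1 (α p.2.1 p.2.2))
    have J1 : ∀ p, Rfst (derivedMap α β αinv) (J p) = J (Rfst (YBEform α β) p) := by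
      rintro ⟨x, a, b⟩
      simp only [J, Rfst, YBEform, hS, h1]
    have J2 : ∀ p, Rsnd (derivedMap α β αinv) (J p) = J (Rsnd (YBEform α β) p) := by
      rintro ⟨x, a, b⟩
      simp only [J, Rsnd, YBEform, haut, derivedMap]
    funext p
    obtain ⟨q, rfl⟩ : ∃ q, J q = p :=
      ⟨(p.1, αinv p.1 p.2.1, αinv (αinv p.1 p.2.1) (αinv p.1 p.2.2)), by simp only [J, hr]⟩
    simp only [Function.comp, J1, J2]
    exact congrArg J (congrFun hYB q)
end

section
/- Let R(x,y) = (α_x(y), β_y(x)) be a non-degenerate YBE solution on a set X with structure group G_R. Then there exists a group homomorphism Λ : G_R → Sym(X) with Λ(ι_G x) = α_x for all x ∈ X (i.e. α extends to a left action of G_R on X), and there exists a group homomorphism P : (G_R)^op → Sym(X) with P(op(ι_G x)) = β_x for all x ∈ X (i.e. β extends to a right action of G_R on X). -/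
/-- The defining relators of the structure group of `R(x,y) = (α_x(y), β_y(x))`:
`x * y = α_x(y) * β_y(x)`. -/
def ybRels {X : Type*} (α β : X → X → X) : Set (FreeGroup X) :=
  {r | ∃ x y : X, r = FreeGroup.of x * FreeGroup.of y *
        (FreeGroup.of (α x y) * FreeGroup.of (β y x))⁻¹}

/-- The structure group `G_R` of the solution `R(x,y) = (α_x(y), β_y(x))`. -/
abbrev StructureGroup {X : Type*} (α β : X → X → X) : Type _ :=
  PresentedGroup (ybRels α β)

theorem stmt5 {X : Type*} (α β : X → X → X)
    (hbij : Function.Bijective (YBEform α β))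
    (hYB : IsBraided (YBEform α β))
    (hα : ∀ x, Function.Bijective (α x)) (hβ : ∀ x, Function.Bijective (β x)) :
    (∃ Λ : StructureGroup α β →* Equiv.Perm X,
        ∀ x y : X, Λ (PresentedGroup.of x) y = α x y) ∧
    (∃ P : (StructureGroup α β)ᵐᵒᵖ →* Equiv.Perm X,
        ∀ x y : X, P (MulOpposite.op (PresentedGroup.of x)) y = β x y) := by
  have h1 : ∀ x y z, α (α x y) (α (β y x) z) = α x (α y z) := fun x y z =>
    congrArg (fun p => p.1) (congrFun hYB (x, y, z))
  have h2 : ∀ x y z, β z (β y x) = β (β z y) (β (α y z) x) := fun x y z =>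
    congrArg (fun p => p.2.2) (congrFun hYB (x, y, z))
  constructor
  · have hr : ∀ r ∈ ybRels α β,
        FreeGroup.lift (fun x => Equiv.ofBijective (α x) (hα x)) r = 1 := by
      rintro r ⟨x, y, rfl⟩
      rw [map_mul, map_inv, mul_inv_eq_one]
      ext z
      simp [h1]
    refine ⟨PresentedGroup.toGroup hr, fun x y => ?_⟩
    rw [PresentedGroup.toGroup.of]
    rfl
  · have hr : ∀ r ∈ ybRels α β,
        FreeGroup.lift (fun x => (Equiv.ofBijective (β x) (hβ x))⁻¹) r = 1 := by
      rintro r ⟨x, y, rfl⟩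
      rw [map_mul, map_inv, mul_inv_eq_one]
      simp only [map_mul, FreeGroup.lift_apply_of, ← mul_inv_rev]
      congr 1
      ext z
      simpa using h2 z x y
    refine ⟨{ toFun := fun g => (PresentedGroup.toGroup hr g.unop)⁻¹
              map_one' := by simp
              map_mul' := fun a b => by simp }, fun x y => ?_⟩
    change (PresentedGroup.toGroup hr (PresentedGroup.of x))⁻¹ y = _
    rw [PresentedGroup.toGroup.of, inv_inv]
    rfl
end

section
/- Let R(x,y) = (α_x(y), β_y(x)) be a non-degenerate YBE solution on a set X and set φ_R(x,y) := α_y(β_{α_x⁻¹(y)}(x)), where α_x⁻¹ denotes the inverse of the bijection α_x. Let Λ : G_R → Sym(X) be a group homomorphism with Λ(ι_G x) = α_x for all x ∈ X. Then φ_R(Λ(g)(x), Λ(g)(y)) = Λ(g)(φ_R(x,y)) for all g ∈ G_R and all x, y ∈ X. -/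
theorem stmt6 {X : Type*} (α β αinv : X → X → X)
    (hbij : Function.Bijective (YBEform α β))
    (hYB : IsBraided (YBEform α β))
    (hα : ∀ x, Function.Bijective (α x)) (hβ : ∀ x, Function.Bijective (β x))
    (hinv : ∀ x, Function.LeftInverse (αinv x) (α x) ∧
      Function.RightInverse (αinv x) (α x))
    (Λ : StructureGroup α β →* Equiv.Perm X)
    (hΛ : ∀ x y : X, Λ (PresentedGroup.of x) y = α x y) :
    ∀ (g : StructureGroup α β) (x y : X),
      α (Λ g y) (β (αinv (Λ g x) (Λ g y)) (Λ g x)) =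
        Λ g (α y (β (αinv x y) x)) := by
  have e1 : ∀ x y z, α (α x y) (α (β y x) z) = α x (α y z) := fun x y z =>
    congrArg (fun p : X × X × X => p.1) (congrFun hYB (x, y, z))
  have e2 : ∀ x y z, β (α (β y x) z) (α x y) = α (β (α y z) x) (β z y) := fun x y z =>
    congrArg (fun p : X × X × X => p.2.1) (congrFun hYB (x, y, z))
  intro g
  have hg : g ∈ Subgroup.closure (Set.range (PresentedGroup.of (rels := ybRels α β))) := by
    rw [PresentedGroup.closure_range_of]; trivial
  induction hg using Subgroup.closure_induction with
  | mem g hg =>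
    obtain ⟨a, rfl⟩ := hg
    intro x y
    obtain ⟨z, rfl⟩ := (hα x).2 y
    simp only [hΛ]
    rw [(hinv x).1 z, ← e1 a x z, (hinv (α a x)).1, e2, e1, e1]
  | one => intro x y; simp
  | mul g h _ _ ihg ihh =>
    intro x y
    simp only [map_mul, Equiv.Perm.mul_apply]
    rw [ihg, ihh]
  | inv g _ ih =>
    intro x y
    have := ih (Λ g⁻¹ x) (Λ g⁻¹ y)
    have h1 : ∀ u, Λ g ((Λ g)⁻¹ u) = u := fun u => (Λ g).apply_symm_apply u
    have h2 : ∀ u, (Λ g)⁻¹ (Λ g u) = u := fun u => (Λ g).symm_apply_apply u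
    simp only [map_inv, h1] at this ⊢
    rw [this, h2]
end

section
/- Let R(x,y) = (α_x(y), β_y(x)) be a non-degenerate YBE solution on a set X, and let Θ : G_R → Aut(A_R) be a group homomorphism with Θ(ι_G x)(ι_A y) = ι_A(α_x(y)) for all x, y ∈ X. Then there exists a unique map b : G_R → A_R satisfying b(ι_G x) = ι_A x for all x ∈ X and the 1-cocycle identity b(gh) = b(g)·Θ(g)(b(h)) for all g, h ∈ G_R, and this b is bijective. Consequently ρ_g(a) := b(g)·Θ(g)(a) defines a regular affine action of G_R on A_R (the affine action associated to R). -/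
/-- The defining relators of the derived structure group of `R`:
`x * y = y * φ_R(x,y)` with `φ_R(x,y) = α_y(β_{α_x⁻¹(y)}(x))`. -/
def derivedRels {X : Type*} (α β αinv : X → X → X) : Set (FreeGroup X) :=
  {r | ∃ x y : X, r = FreeGroup.of x * FreeGroup.of y *
        (FreeGroup.of y * FreeGroup.of (α y (β (αinv x y) x)))⁻¹}

/-- The derived structure group `A_R` of the solution `R`. -/
abbrev DerivedGroup {X : Type*} (α β αinv : X → X → X) : Type _ :=
  PresentedGroup (derivedRels α β αinv)

section helpers

theorem pg_induct {X : Type*} {rels : Set (FreeGroup X)} {p : PresentedGroup rels → Prop}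
    (g : PresentedGroup rels)
    (hof : ∀ x, p (PresentedGroup.of x)) (h1 : p 1)
    (hm : ∀ a b, p a → p b → p (a * b)) (hi : ∀ a, p a → p a⁻¹) : p g := by
  have hg : g ∈ Subgroup.closure (Set.range (PresentedGroup.of (rels := rels))) := by
    rw [PresentedGroup.closure_range_of]; trivial
  induction hg using Subgroup.closure_induction with
  | mem x hx => obtain ⟨y, rfl⟩ := hx; exact hof y
  | one => exact h1
  | mul a b _ _ ha hb => exact hm a b ha hb
  | inv a _ ha => exact hi a ha

variable {X : Type*} {α β αinv : X → X → X}

theorem sg_rel (x y : X) : (PresentedGroup.of x * PresentedGroup.of y : StructureGroup α β) =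
    PresentedGroup.of (α x y) * PresentedGroup.of (β y x) := by
  have h : FreeGroup.of x * FreeGroup.of y *
        (FreeGroup.of (α x y) * FreeGroup.of (β y x))⁻¹ ∈ ybRels α β := ⟨x, y, rfl⟩
  have := PresentedGroup.one_of_mem h
  rw [map_mul, map_inv, mul_inv_eq_one, map_mul, map_mul] at this
  exact this

theorem dg_rel (x y : X) :
    (PresentedGroup.of x * PresentedGroup.of y : DerivedGroup α β αinv) =
    PresentedGroup.of y * PresentedGroup.of (α y (β (αinv x y) x)) := by
  have h : FreeGroup.of x * FreeGroup.of y *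
        (FreeGroup.of y * FreeGroup.of (α y (β (αinv x y) x)))⁻¹ ∈ derivedRels α β αinv :=
    ⟨x, y, rfl⟩
  have := PresentedGroup.one_of_mem h
  rw [map_mul, map_inv, mul_inv_eq_one, map_mul, map_mul] at this
  exact this

theorem sg_lift {H : Type*} [Group H] (f : X → H)
    (hf : ∀ x y, f x * f y = f (α x y) * f (β y x)) :
    ∃ F : StructureGroup α β →* H, ∀ x, F (PresentedGroup.of x) = f x := by
  have : ∀ r ∈ ybRels α β, FreeGroup.lift f r = 1 := by
    rintro r ⟨x, y, rfl⟩
    rw [map_mul, map_inv, mul_inv_eq_one]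
    simp only [map_mul, FreeGroup.lift_apply_of]
    exact hf x y
  exact ⟨PresentedGroup.toGroup this, fun x => PresentedGroup.toGroup.of this⟩

theorem dg_lift {H : Type*} [Group H] (f : X → H)
    (hf : ∀ x y, f x * f y = f y * f (α y (β (αinv x y) x))) :
    ∃ F : DerivedGroup α β αinv →* H, ∀ x, F (PresentedGroup.of x) = f x := by
  have : ∀ r ∈ derivedRels α β αinv, FreeGroup.lift f r = 1 := by
    rintro r ⟨x, y, rfl⟩
    rw [map_mul, map_inv, mul_inv_eq_one]
    simp only [map_mul, FreeGroup.lift_apply_of]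
    exact hf x y
  exact ⟨PresentedGroup.toGroup this, fun x => PresentedGroup.toGroup.of this⟩

/-- all the set-level combinatorics -/
theorem braid_eqs (hYB : IsBraided (YBEform α β)) (a b c : X) :
    α (α a b) (α (β b a) c) = α a (α b c) ∧
    β (α (β b a) c) (α a b) = α (β (α b c) a) (β c b) ∧
    β c (β b a) = β (β c b) (β (α b c) a) := by
  have h := congrFun hYB (a, b, c)
  simpa [Rfst, Rsnd, YBEform] using h

/-- rack operation -/
def ybφ (α β αinv : X → X → X) (y x : X) : X := α y (β (αinv x y) x)

variable (hbij : Function.Bijective (YBEform α β)) (hYB : IsBraided (YBEform α β))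
  (hα : ∀ x, Function.Bijective (α x)) (hβ : ∀ x, Function.Bijective (β x))
  (hinv : ∀ x, Function.LeftInverse (αinv x) (α x) ∧ Function.RightInverse (αinv x) (α x))

theorem ybφ_apply
    (hinv : ∀ x, Function.LeftInverse (αinv x) (α x) ∧ Function.RightInverse (αinv x) (α x))
    (a b : X) : ybφ α β αinv (α a b) a = α (α a b) (β b a) := by
  simp [ybφ, (hinv a).1 b]

theorem ybφ_equiv (hYB : IsBraided (YBEform α β))
    (hinv : ∀ x, Function.LeftInverse (αinv x) (α x) ∧ Function.RightInverse (αinv x) (α x))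
    (a b p : X) : α a (ybφ α β αinv p b) = ybφ α β αinv (α a p) (α a b) := by
  obtain ⟨c, rfl⟩ : ∃ c, α b c = p := ⟨_, (hinv b).2 p⟩
  obtain ⟨h1, h2, h3⟩ := braid_eqs hYB a b c
  rw [ybφ_apply hinv, ← h1, ybφ_apply hinv, h2, h1]
  exact ((braid_eqs hYB a (α b c) (β c b)).1).symm

theorem ybφ_rack (hYB : IsBraided (YBEform α β))
    (hinv : ∀ x, Function.LeftInverse (αinv x) (α x) ∧ Function.RightInverse (αinv x) (α x))
    (x y z : X) : ybφ α β αinv z (ybφ α β αinv y x) =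
      ybφ α β αinv (ybφ α β αinv z y) (ybφ α β αinv z x) := by
  obtain ⟨b, rfl⟩ : ∃ c, α x c = y := ⟨_, (hinv x).2 y⟩
  obtain ⟨c', rfl⟩ : ∃ c, α x c = z := ⟨_, (hinv x).2 z⟩
  obtain ⟨c, rfl⟩ : ∃ c, α b c = c' := ⟨_, (hinv b).2 c'⟩
  obtain ⟨h1, h2, h3⟩ := braid_eqs hYB x b c
  have e1 : ybφ α β αinv (α x (α b c)) (ybφ α β αinv (α x b) x) =
      α (α x b) (α (α (β b x) c) (β c (β b x))) := by
    rw [ybφ_apply hinv, ← h1, ← ybφ_equiv hYB hinv, ybφ_apply hinv]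
  have e2 : ybφ α β αinv (α x (α b c)) (α x b) =
      α (α x (α b c)) (α (β (α b c) x) (β c b)) := by
    rw [← ybφ_equiv hYB hinv, ybφ_apply hinv]
    exact (braid_eqs hYB x (α b c) (β c b)).1.symm
  rw [e1, e2, ybφ_apply hinv x (α b c), ← ybφ_equiv hYB hinv, ybφ_apply hinv, ← h3, ← h2, ← h1]
  exact (braid_eqs hYB (α x b) (α (β b x) c) _).1.symm

include hbij hYB hα hβ hinv in
theorem diag_bij : ∃ U : X → X, (∀ u, αinv (U u) (U u) = u) ∧ (∀ y, U (αinv y y) = y) := by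
  choose βi hβi using fun x => (hβ x).2
  have hβi' : ∀ x y, βi x (β x y) = y := fun x y => (hβ x).1 (hβi x _)
  have hl := fun x => (hinv x).1
  have hr := fun x => (hinv x).2
  have h1 := fun a b c => (braid_eqs hYB a b c).1
  have h3 := fun a b c => (braid_eqs hYB a b c).2.2
  refine ⟨fun u => α (βi u u) u, ?_⟩
  have first : ∀ u, αinv (α (βi u u) u) (α (βi u u) u) = u := by
    intro u
    have : α (α (βi u u) u) u = α (βi u u) u := by
      have h := h1 (βi u u) u (αinv u u)
      rwa [hβi, hr u] at h
    apply (hα (α (βi u u) u)).1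
    exact ((hr _) _).trans this.symm
  refine ⟨first, ?_⟩
  · -- π surjective
    have surj : ∀ z, ∃ x, ybφ α β αinv x x = z := by
      intro z
      have key : ∀ y, Function.Surjective (ybφ α β αinv y) := by
        intro y w
        obtain ⟨⟨x, u⟩, h⟩ := hbij.2 (y, αinv y w)
        simp only [YBEform, Prod.mk.injEq] at h
        obtain ⟨ha, hb⟩ := h
        refine ⟨x, ?_⟩
        rw [← ha, ybφ_apply hinv, hb, ha]
        exact hr y w
      obtain ⟨x, hx⟩ := key z z
      refine ⟨x, ?_⟩
      have inj : Function.Injective (ybφ α β αinv z) := by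
        intro p q hpq
        have hp := ybφ_apply (β := β) hinv p (αinv p z)
        have hq := ybφ_apply (β := β) hinv q (αinv q z)
        rw [hr] at hp hq
        have hb : β (αinv p z) p = β (αinv q z) q := (hα z).1 (by rw [← hp, ← hq, hpq])
        have := @hbij.1 (p, αinv p z) (q, αinv q z) (by
          simp only [YBEform, Prod.mk.injEq]
          exact ⟨by rw [hr, hr], hb⟩)
        exact (Prod.mk.inj this).1
      apply inj
      rw [ybφ_rack hYB hinv, hx]
    intro z
    obtain ⟨y, rfl⟩ := surj z
    set u := αinv y y with hu
    have hyu : α y u = y := hr y y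
    set v := β u y with hv
    have hβuv : ∀ t, β u t = β v t := by
      intro t
      obtain ⟨s, rfl⟩ := (hβ y).2 t
      have := h3 s y u
      rwa [hyu, ← hv, ] at this
    have hw : βi v v = y := by
      apply (hβ v).1; rw [hβi, ← hβuv]
    have hπ : ybφ α β αinv y y = α y v := by rfl
    have hT : αinv (α y v) (α y v) = v := by
      have := first v
      rwa [hw] at this
    rw [hπ, hT]
    simp only [hw]


include hbij hYB hα hβ hinv in
theorem cocycle_bij (Θ : StructureGroup α β →* MulAut (DerivedGroup α β αinv))
    (hΘ : ∀ x y : X, Θ (PresentedGroup.of x) (PresentedGroup.of y) =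
      PresentedGroup.of (α x y))
    (b : StructureGroup α β → DerivedGroup α β αinv)
    (hb1 : ∀ x : X, b (PresentedGroup.of x) = PresentedGroup.of x)
    (hb2 : ∀ g h : StructureGroup α β, b (g * h) = b g * Θ g (b h)) :
    Function.Bijective b := by
  obtain ⟨U, hU1, hU2⟩ := diag_bij hbij hYB hα hβ hinv
  have hl := fun x => (hinv x).1
  have hr := fun x => (hinv x).2
  obtain ⟨S, hS⟩ := sg_lift (α := α) (β := β) (H := Equiv.Perm X)
    (fun x => ⟨α x, αinv x, hl x, hr x⟩) (by
      intro x y; ext c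
      exact (braid_eqs hYB x y c).1.symm)
  have hS1 : ∀ x y, S (PresentedGroup.of x) y = α x y := fun x y => by rw [hS]; rfl
  have hS2 : ∀ x y, (S (PresentedGroup.of x))⁻¹ y = αinv x y := fun x y => by rw [hS]; rfl
  -- equivariance
  have hSφ : ∀ g x y, S g (ybφ α β αinv y x) = ybφ α β αinv (S g y) (S g x) := by
    intro g
    induction g using pg_induct with
    | hof a => intro x y; rw [hS1, hS1, hS1]; exact ybφ_equiv hYB hinv _ _ _
    | h1 => intro x y; simp
    | hm g h hg hh => intro x y; simp [hh, hg]
    | hi g hg =>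
      intro x y
      apply (S g).injective
      rw [hg]; simp
  have hSΘ : ∀ g x, Θ g (PresentedGroup.of x) = PresentedGroup.of (S g x) := by
    intro g
    induction g using pg_induct with
    | hof a => intro x; rw [hS1, hΘ]
    | h1 => intro x; simp
    | hm g h hg hh => intro x; simp [hh, hg]
    | hi g hg =>
      intro x
      apply (Θ g).injective
      rw [hg]; simp
  let f : X → Equiv.Perm (StructureGroup α β) := fun x =>
    { toFun := fun g => g * PresentedGroup.of ((S g)⁻¹ x)
      invFun := fun k => k * (PresentedGroup.of (U ((S k)⁻¹ x)))⁻¹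
      left_inv := by
        intro g
        simp only [map_mul, mul_inv_rev, Equiv.Perm.mul_apply, hS2, hU2]
        simp
      right_inv := by
        intro k
        have e : (S (k * (PresentedGroup.of (U ((S k)⁻¹ x)))⁻¹))⁻¹ x = U ((S k)⁻¹ x) := by
          simp only [map_mul, map_inv, mul_inv_rev, inv_inv, Equiv.Perm.mul_apply, hS1]
          conv_lhs => rw [← hU1 ((S k)⁻¹ x)]
          rw [hU1]
          conv_lhs => arg 2; rw [← hU1 ((S k)⁻¹ x)]
          exact hr _ _
        simp only [e]
        simp }
  have hf : ∀ x g, f x g = g * PresentedGroup.of ((S g)⁻¹ x) := fun x g => rfl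
  obtain ⟨F, hF⟩ := dg_lift (α := α) (β := β) (αinv := αinv)
    (H := (Equiv.Perm (StructureGroup α β))ᵐᵒᵖ) (fun x => MulOpposite.op (f x)) (by
      intro x y
      rw [← MulOpposite.op_mul, ← MulOpposite.op_mul]
      congr 1
      ext g
      change f y (f x g) = f (ybφ α β αinv y x) (f y g)
      have e : (S g)⁻¹ (ybφ α β αinv y x) = ybφ α β αinv ((S g)⁻¹ y) ((S g)⁻¹ x) := by
        rw [← map_inv]; exact hSφ _ _ _
      rw [hf x, hf y g, hf, hf]
      simp only [map_mul, mul_inv_rev, Equiv.Perm.mul_apply, hS2, e]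
      rw [mul_assoc, mul_assoc, sg_rel]
      rw [hr]
      simp only [ybφ, hl _ _])
  have hF' : ∀ x, (F (PresentedGroup.of x)).unop = f x := fun x => by rw [hF]; rfl
  have hFm : ∀ a a' g, (F (a * a')).unop g = (F a').unop ((F a).unop g) := fun a a' g => by
    rw [map_mul]; rfl
  have hFi : ∀ a g, (F a⁻¹).unop g = (F a).unop.symm g := fun a g => by
    rw [map_inv]; rfl
  have hb0 : b 1 = 1 := by
    have := hb2 1 1
    simpa using this
  have hA : ∀ g h, (F (Θ h (b g))).unop h = h * g := by
    intro g
    induction g using pg_induct with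
    | hof x => intro h; rw [hb1, hSΘ, hF', hf]; simp
    | h1 => intro h; simp [hb0]
    | hm g g' hg hg' =>
      intro h
      rw [hb2, map_mul, hFm, hg, ← MulAut.mul_apply, ← map_mul, hg', mul_assoc]
    | hi g hg =>
      intro h
      have e : b g⁻¹ = (Θ g⁻¹ (b g))⁻¹ := by
        have := hb2 g⁻¹ g
        rw [inv_mul_cancel, hb0] at this
        exact eq_inv_of_mul_eq_one_left this.symm
      rw [e, map_inv, hFi, ← MulAut.mul_apply, ← map_mul, Equiv.symm_apply_eq, hg]
      simp
  have hB : ∀ a g, b ((F a).unop g) = b g * a := by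
    intro a
    induction a using pg_induct with
    | hof x => intro g; rw [hF', hf, hb2, hb1, hSΘ]; simp
    | h1 => intro g; simp
    | hm a a' ha ha' => intro g; rw [hFm, ha', ha, mul_assoc]
    | hi a ha =>
      intro g
      rw [hFi, eq_mul_inv_iff_mul_eq, ← ha, Equiv.apply_symm_apply]
  constructor
  · intro g g' h
    have h1 := hA g 1
    have h2 := hA g' 1
    rw [h] at h1
    simpa using h1.symm.trans h2
  · intro a
    exact ⟨(F a).unop 1, by rw [hB, hb0, one_mul]⟩

include hinv in
theorem cocycle_ex (Θ : StructureGroup α β →* MulAut (DerivedGroup α β αinv))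
    (hΘ : ∀ x y : X, Θ (PresentedGroup.of x) (PresentedGroup.of y) =
      PresentedGroup.of (α x y)) :
    ∃ b : StructureGroup α β → DerivedGroup α β αinv,
        (∀ x : X, b (PresentedGroup.of x) = PresentedGroup.of x) ∧
        (∀ g h : StructureGroup α β, b (g * h) = b g * Θ g (b h)) := by
  obtain ⟨F, hF⟩ := sg_lift (α := α) (β := β)
    (H := DerivedGroup α β αinv ⋊[Θ] StructureGroup α β)
    (fun x => ⟨PresentedGroup.of x, PresentedGroup.of x⟩) (by
      intro x y
      ext
      · simp only [SemidirectProduct.mul_left, hΘ]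
        rw [dg_rel, (hinv x).1 y]
      · exact sg_rel x y)
  have hr : ∀ g, (F g).right = g := by
    intro g
    have : SemidirectProduct.rightHom.comp F = MonoidHom.id _ := by
      apply PresentedGroup.ext
      intro x
      simp [hF]
    exact DFunLike.congr_fun this g
  refine ⟨fun g => (F g).left, fun x => by simp [hF], fun g h => ?_⟩
  simp [hr]

theorem cocycle_uniq (Θ : StructureGroup α β →* MulAut (DerivedGroup α β αinv))
    (b b' : StructureGroup α β → DerivedGroup α β αinv)
    (hb1 : ∀ x : X, b (PresentedGroup.of x) = PresentedGroup.of x)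
    (hb2 : ∀ g h : StructureGroup α β, b (g * h) = b g * Θ g (b h))
    (hb1' : ∀ x : X, b' (PresentedGroup.of x) = PresentedGroup.of x)
    (hb2' : ∀ g h : StructureGroup α β, b' (g * h) = b' g * Θ g (b' h)) : b = b' := by
  have hb0 : b 1 = 1 := by simpa using hb2 1 1
  have hb0' : b' 1 = 1 := by simpa using hb2' 1 1
  funext g
  induction g using pg_induct with
  | hof x => rw [hb1, hb1']
  | h1 => rw [hb0, hb0']
  | hm g h hg hh => rw [hb2, hb2', hg, hh]
  | hi g hg =>
    have h1 := hb2 g⁻¹ g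
    have h2 := hb2' g⁻¹ g
    rw [inv_mul_cancel, hb0] at h1
    rw [inv_mul_cancel, hb0'] at h2
    rw [eq_inv_of_mul_eq_one_left h1.symm, eq_inv_of_mul_eq_one_left h2.symm, hg]

end helpers


theorem stmt8 {X : Type*} (α β αinv : X → X → X)
    (hbij : Function.Bijective (YBEform α β))
    (hYB : IsBraided (YBEform α β))
    (hα : ∀ x, Function.Bijective (α x)) (hβ : ∀ x, Function.Bijective (β x))
    (hinv : ∀ x, Function.LeftInverse (αinv x) (α x) ∧
      Function.RightInverse (αinv x) (α x))
    (Θ : StructureGroup α β →* MulAut (DerivedGroup α β αinv))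
    (hΘ : ∀ x y : X, Θ (PresentedGroup.of x) (PresentedGroup.of y) =
      PresentedGroup.of (α x y)) :
    (∃! b : StructureGroup α β → DerivedGroup α β αinv,
        (∀ x : X, b (PresentedGroup.of x) = PresentedGroup.of x) ∧
        (∀ g h : StructureGroup α β, b (g * h) = b g * Θ g (b h))) ∧
    (∀ b : StructureGroup α β → DerivedGroup α β αinv,
        ((∀ x : X, b (PresentedGroup.of x) = PresentedGroup.of x) ∧
          (∀ g h : StructureGroup α β, b (g * h) = b g * Θ g (b h))) →
        Function.Bijective b ∧
          ∀ a a' : DerivedGroup α β αinv, ∃! g : StructureGroup α β,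
            b g * Θ g a = a') := by
  refine ⟨?_, ?_⟩
  · obtain ⟨b, hb⟩ := cocycle_ex hinv Θ hΘ
    exact ⟨b, hb, fun b' hb' => cocycle_uniq Θ b' b hb'.1 hb'.2 hb.1 hb.2⟩
  · rintro b ⟨hb1, hb2⟩
    have hB := cocycle_bij hbij hYB hα hβ hinv Θ hΘ b hb1 hb2
    refine ⟨hB, fun a a' => ?_⟩
    obtain ⟨h, rfl⟩ := hB.2 a
    obtain ⟨k, rfl⟩ := hB.2 a'
    refine ⟨k * h⁻¹, ?_, ?_⟩
    · show b (k * h⁻¹) * Θ (k * h⁻¹) (b h) = b k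
      rw [← hb2]; simp
    · intro g hg
      rw [← hb2] at hg
      exact eq_mul_inv_of_mul_eq (hB.1 hg)
end

section
/- Let G, A, H be groups, θ : H → A a group homomorphism, π : G → Aut(A) a group homomorphism, b : G → A a bijective 1-cocycle with respect to π, and σ : G → Aut(H) a group homomorphism such that θ(σ(g)(h)) = π(g)(θ(h)) for all g ∈ G and h ∈ H. Define a new operation on H by x · y := x σ(b⁻¹(θ(x)))(y). Then (H, ·) is a group whose identity element is the identity of H, and the map κ : H → G defined by κ(h) := b⁻¹(θ(h)) satisfies κ(x · y) = κ(x)κ(y) for all x, y ∈ H (so κ is a group homomorphism from (H, ·) to G); moreover θ(x · y) = θ(x)·π(κ(x))(θ(y)) for all x, y ∈ H. -/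
/-- The lifted multiplication `x · y = x * σ_{b⁻¹(θ(x))}(y)` on `H`. -/
def liftMul {G A H : Type*} [Group G] [Group A] [Group H]
    (θ : H →* A) (σ : G →* MulAut H) (binv : A → G) (x y : H) : H :=
  x * σ (binv (θ x)) y

theorem stmt10 {G A H : Type*} [Group G] [Group A] [Group H]
    (θ : H →* A) (π : G →* MulAut A) (b : G → A) (binv : A → G)
    (σ : G →* MulAut H)
    (hb : ∀ g g' : G, b (g * g') = b g * π g (b g'))
    (hbinv₁ : Function.LeftInverse binv b)
    (hbinv₂ : Function.RightInverse binv b)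
    (hequiv : ∀ (g : G) (h : H), θ (σ g h) = π g (θ h)) :
    (∀ x y z : H, liftMul θ σ binv (liftMul θ σ binv x y) z =
        liftMul θ σ binv x (liftMul θ σ binv y z)) ∧
    (∀ x : H, liftMul θ σ binv 1 x = x ∧ liftMul θ σ binv x 1 = x) ∧
    (∀ x : H, ∃ y : H, liftMul θ σ binv x y = 1 ∧ liftMul θ σ binv y x = 1) ∧
    (∀ x y : H, binv (θ (liftMul θ σ binv x y)) = binv (θ x) * binv (θ y)) ∧
    (∀ x y : H, θ (liftMul θ σ binv x y) = θ x * π (binv (θ x)) (θ y)) := by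
  have h5 : ∀ x y : H, θ (liftMul θ σ binv x y) = θ x * π (binv (θ x)) (θ y) := by
    intro x y
    simp [liftMul, hequiv]
  have h4 : ∀ x y : H, binv (θ (liftMul θ σ binv x y)) = binv (θ x) * binv (θ y) := by
    intro x y
    apply hbinv₁.injective
    rw [hb, hbinv₂, hbinv₂, hbinv₂, h5]
  have b1 : b 1 = 1 := by
    have := hb 1 1
    simpa using this
  have k1 : binv 1 = 1 := by rw [← b1, hbinv₁]
  have hinv : ∀ x : H, liftMul θ σ binv x ((σ (binv (θ x)))⁻¹ x⁻¹) = 1 := by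
    intro x
    simp [liftMul]
  refine ⟨?_, ?_, ?_, h4, h5⟩
  · intro x y z
    have h := h4 x y
    rw [liftMul, h]
    simp [liftMul, mul_assoc]
  · intro x
    simp [liftMul, k1]
  · intro x
    refine ⟨_, hinv x, ?_⟩
    have h := h4 x ((σ (binv (θ x)))⁻¹ x⁻¹)
    rw [hinv, map_one, k1] at h
    rw [liftMul, ← inv_eq_of_mul_eq_one_right h.symm, map_inv, map_inv, inv_mul_cancel]
end

section
/- Let G, G̃, A, Ã be groups, π : G → Aut(A) a homomorphism with 1-cocycle b : G → A, π̃ : G̃ → Aut(Ã) a homomorphism with bijective 1-cocycle b̃ : G̃ → Ã, and θ : G → Aut(G̃) a homomorphism such that θ(g) ∘ (b̃⁻¹ ∘ π̃(h) ∘ b̃) = (b̃⁻¹ ∘ π̃(θ(g)(h)) ∘ b̃) ∘ θ(g) as maps G̃ → G̃, for all g ∈ G and h ∈ G̃. For (g,h) ∈ G × G̃ define Γ_{(g,h)} : A × Ã → A × Ã by Γ_{(g,h)}(a,t) = (b(g)·π(g)(a), b̃(h)·π̃(h)(b̃(θ(g)(b̃⁻¹(t))))). Then Γ_{(g g', h·θ(g)(h'))}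 = Γ_{(g,h)} ∘ Γ_{(g',h')} for all g, g' ∈ G and h, h' ∈ G̃; that is, Γ defines an action of the semidirect product group G ⋉_θ G̃ (with multiplication (g,h)(g',h') = (gg', h·θ(g)(h'))) on A × Ã. -/
/-- The semi-direct product affine action:
`Γ_{(g,h)}(a,t) = (b(g)·π(g)(a), b̃(h)·π̃(h)(b̃(θ(g)(b̃⁻¹(t)))))`. -/
def sdGamma {G G' A A' : Type*} [Group G] [Group G'] [Group A] [Group A']
    (π : G →* MulAut A) (b : G → A) (π' : G' →* MulAut A') (b' : G' → A')
    (b'inv : A' → G') (θ : G →* MulAut G') : G × G' → A × A' → A × A' :=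
  fun p q => (b p.1 * π p.1 q.1, b' p.2 * π' p.2 (b' (θ p.1 (b'inv q.2))))

theorem stmt11 {G G' A A' : Type*} [Group G] [Group G'] [Group A] [Group A']
    (π : G →* MulAut A) (b : G → A) (π' : G' →* MulAut A') (b' : G' → A')
    (b'inv : A' → G') (θ : G →* MulAut G')
    (hb : ∀ g h : G, b (g * h) = b g * π g (b h))
    (hb' : ∀ g h : G', b' (g * h) = b' g * π' g (b' h))
    (hb'inv₁ : Function.LeftInverse b'inv b')
    (hb'inv₂ : Function.RightInverse b'inv b')
    (hcomp : ∀ (g : G) (h t : G'),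
      θ g (b'inv (π' h (b' t))) = b'inv (π' (θ g h) (b' (θ g t)))) :
    ∀ (g g' : G) (h h' : G') (a : A) (t : A'),
      sdGamma π b π' b' b'inv θ (g * g', h * θ g h') (a, t) =
        sdGamma π b π' b' b'inv θ (g, h)
          (sdGamma π b π' b' b'inv θ (g', h') (a, t)) := by
  intro g g' h h' a t
  unfold sdGamma
  simp only [← hb', hb'inv₁ _]
  simp only [hb, map_mul, MulAut.mul_apply, mul_assoc]
end

section
/- Let G and A be groups, π : G → Aut(A) a group homomorphism, and b : G → A a bijective 1-cocycle with respect to π. Define α_g(h) := b⁻¹(π(g)(b(h))) and β_h(g) := α_g(h)⁻¹ g h for g, h ∈ G. Then g h = α_g(h) β_h(g) for all g, h ∈ G, and the map R(g,h) := (α_g(h), β_h(g)) is a non-degenerate YBE solution on the underlying set of the group G. -/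
theorem stmt12 {G A : Type*} [Group G] [Group A]
    (π : G →* MulAut A) (b : G → A) (binv : A → G)
    (hb : ∀ g h : G, b (g * h) = b g * π g (b h))
    (hbinv₁ : Function.LeftInverse binv b)
    (hbinv₂ : Function.RightInverse binv b) :
    (∀ g h : G, g * h = binv (π g (b h)) * ((binv (π g (b h)))⁻¹ * g * h)) ∧
    Function.Bijective (YBEform (fun g h : G => binv (π g (b h)))
      (fun h g : G => (binv (π g (b h)))⁻¹ * g * h)) ∧
    IsBraided (YBEform (fun g h : G => binv (π g (b h)))
      (fun h g : G => (binv (π g (b h)))⁻¹ * g * h)) ∧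
    (∀ g : G, Function.Bijective fun h : G => binv (π g (b h))) ∧
    (∀ h : G, Function.Bijective fun g : G => (binv (π g (b h)))⁻¹ * g * h) := by
  have hb1 : b 1 = 1 := by
    have h := hb 1 1
    simpa using h
  obtain ⟨a, ha⟩ : ∃ a : G → G → G, ∀ g h, binv (π g (b h)) = a g h := ⟨_, fun _ _ => rfl⟩
  have hba : ∀ g h, b (a g h) = π g (b h) := fun g h => by rw [← ha, hbinv₂]
  have binj : Function.Injective b := hbinv₁.injective
  simp only [ha]
  have a_mul : ∀ g h k, a (g * h) k = a g (a h k) := fun g h k => binj (by simp [hba])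
  have a_one : ∀ k, a 1 k = k := fun k => binj (by simp [hba])
  have a_g1 : ∀ g, a g 1 = 1 := fun g => binj (by simp [hba, hb1])
  obtain ⟨β, hβ⟩ : ∃ β : G → G → G, ∀ h g, (a g h)⁻¹ * g * h = β h g := ⟨_, fun _ _ => rfl⟩
  simp only [hβ]
  have prod : ∀ g h, a g h * β h g = g * h := fun g h => by rw [← hβ]; group
  have a_g_mul : ∀ g h k, a g (h * k) = a g h * a (β h g) k := fun g h k => binj (by
    rw [hba, hb, hb, hba, hba, map_mul, ← MulAut.mul_apply, ← MulAut.mul_apply, ← map_mul,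
      ← map_mul, prod])
  have β_mul : ∀ g h k, β (h * k) g = β k (β h g) := fun g h k => by
    rw [← hβ, a_g_mul, ← hβ k, ← hβ h]; group
  have β_one : ∀ g, β 1 g = g := fun g => by rw [← hβ, a_g1]; group
  have key : ∀ g h, b g = b (a g h * β h g) * (b (a g h))⁻¹ := fun g h => by
    rw [prod, hb, hba]; group
  refine ⟨fun g h => (prod g h).symm, ⟨?_, ?_⟩, ?_, ?_, ?_⟩
  · rintro ⟨g, h⟩ ⟨g', h'⟩ e
    simp only [YBEform, Prod.mk.injEq] at e
    obtain ⟨e1, e2⟩ := e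
    have hg : g = g' := binj (by rw [key g h, key g' h', e1, e2])
    subst hg
    have p := prod g h
    rw [e1, e2, prod] at p
    rw [mul_left_cancel p]
  · rintro ⟨u, v⟩
    let g := binv (b (u * v) * (b u)⁻¹)
    have hg : b g = b (u * v) * (b u)⁻¹ := hbinv₂ _
    have h1 : a g (g⁻¹ * (u * v)) = u := binj (by
      have h2 := hb g (g⁻¹ * (u * v))
      rw [mul_inv_cancel_left, hg] at h2
      rw [hba]
      apply mul_left_cancel (a := b (u * v) * (b u)⁻¹)
      rw [← h2]; group)
    refine ⟨(g, g⁻¹ * (u * v)), ?_⟩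
    simp only [YBEform, Prod.mk.injEq]
    refine ⟨h1, ?_⟩
    rw [← hβ, h1]; group
  · funext ⟨x, y, z⟩
    simp only [Function.comp, Rfst, Rsnd, YBEform, Prod.mk.injEq]
    have e1 : a (a x y) (a (β y x) z) = a x (a y z) := by
      rw [← a_mul, prod, a_mul]
    have e3 : β z (β y x) = β (β z y) (β (a y z) x) := by
      rw [← β_mul, ← β_mul, prod]
    refine ⟨e1, ?_, e3⟩
    have p1 := prod (a x y) (a (β y x) z)
    have p2 := prod (β (a y z) x) (β z y)
    have p3 := prod (β y x) z
    have p4 := prod x (a y z)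
    have p5 := prod x y
    have p6 := prod y z
    rw [e1] at p1
    rw [← e3] at p2
    apply mul_left_cancel (a := a x (a y z))
    apply mul_right_cancel (b := β z (β y x))
    rw [p1, mul_assoc, p3, ← mul_assoc, p5, mul_assoc (a x (a y z)), p2, ← mul_assoc, p4,
      mul_assoc x (a y z), p6, mul_assoc]
  · intro g
    exact Function.bijective_iff_has_inverse.2 ⟨a g⁻¹, fun h => by simp [← a_mul, a_one],
      fun h => by simp [← a_mul, a_one]⟩
  · intro h
    exact Function.bijective_iff_has_inverse.2 ⟨β h⁻¹, fun g => by simp [← β_mul, β_one],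
      fun g => by simp [← β_mul, β_one]⟩
end

section
/- Let R_X and R_Y be non-degenerate YBE solutions on sets X and Y, and let h : X → Y be a YB-homomorphism from R_X to R_Y. Then there exist group homomorphisms h_G : G_X → G_Y and h_A : A_X → A_Y with h_G(ι_G x) = ι_G(h(x)) and h_A(ι_A x) = ι_A(h(x)) for all x ∈ X. Moreover, if (Θ^X, b^X) and (Θ^Y, b^Y) are the affine actions associated to R_X and R_Y, then h_A(Θ^X(g)(a)) = Θ^Y(h_G(g))(h_A(a)) and h_A(b^X(g)) = b^Y(h_G(g)) for all g ∈ G_X and a ∈ A_X; that is, h_A is G_X-equivariant relative to (ρ^X, ρ^Y ∘ h_G). -/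
theorem stmt13 {X Y : Type*}
    (αX βX αXinv : X → X → X) (αY βY αYinv : Y → Y → Y)
    (hbijX : Function.Bijective (YBEform αX βX))
    (hYBX : IsBraided (YBEform αX βX))
    (hαX : ∀ x, Function.Bijective (αX x)) (hβX : ∀ x, Function.Bijective (βX x))
    (hinvX : ∀ x, Function.LeftInverse (αXinv x) (αX x) ∧
      Function.RightInverse (αXinv x) (αX x))
    (hbijY : Function.Bijective (YBEform αY βY))
    (hYBY : IsBraided (YBEform αY βY))
    (hαY : ∀ y, Function.Bijective (αY y)) (hβY : ∀ y, Function.Bijective (βY y))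
    (hinvY : ∀ y, Function.LeftInverse (αYinv y) (αY y) ∧
      Function.RightInverse (αYinv y) (αY y))
    (ΘX : StructureGroup αX βX →* MulAut (DerivedGroup αX βX αXinv))
    (hΘX : ∀ x y : X, ΘX (PresentedGroup.of x) (PresentedGroup.of y) =
      PresentedGroup.of (αX x y))
    (bX : StructureGroup αX βX → DerivedGroup αX βX αXinv)
    (hbX1 : ∀ x : X, bX (PresentedGroup.of x) = PresentedGroup.of x)
    (hbX2 : ∀ g h, bX (g * h) = bX g * ΘX g (bX h))
    (hbX3 : Function.Bijective bX)
    (ΘY : StructureGroup αY βY →* MulAut (DerivedGroup αY βY αYinv))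
    (hΘY : ∀ x y : Y, ΘY (PresentedGroup.of x) (PresentedGroup.of y) =
      PresentedGroup.of (αY x y))
    (bY : StructureGroup αY βY → DerivedGroup αY βY αYinv)
    (hbY1 : ∀ y : Y, bY (PresentedGroup.of y) = PresentedGroup.of y)
    (hbY2 : ∀ g h, bY (g * h) = bY g * ΘY g (bY h))
    (hbY3 : Function.Bijective bY)
    (h : X → Y)
    (hYBhom : YBEform αY βY ∘ Prod.map h h = Prod.map h h ∘ YBEform αX βX) :
    ∃ (hG : StructureGroup αX βX →* StructureGroup αY βY)
      (hA : DerivedGroup αX βX αXinv →* DerivedGroup αY βY αYinv),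
      (∀ x : X, hG (PresentedGroup.of x) = PresentedGroup.of (h x)) ∧
      (∀ x : X, hA (PresentedGroup.of x) = PresentedGroup.of (h x)) ∧
      (∀ (g : StructureGroup αX βX) (a : DerivedGroup αX βX αXinv),
        hA (ΘX g a) = ΘY (hG g) (hA a)) ∧
      (∀ g : StructureGroup αX βX, hA (bX g) = bY (hG g)) := by
  have hα : ∀ x y, αY (h x) (h y) = h (αX x y) := fun x y =>
    congrArg Prod.fst (congrFun hYBhom (x, y))
  have hβ : ∀ x y, βY (h y) (h x) = h (βX y x) := fun x y =>
    congrArg Prod.snd (congrFun hYBhom (x, y))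
  have hαi : ∀ x y, αYinv (h x) (h y) = h (αXinv x y) := by
    intro x y
    have h1 : αY (h x) (h (αXinv x y)) = h y := by
      rw [hα, (hinvX x).2 y]
    rw [← h1, (hinvY (h x)).1]
  have relG : ∀ r ∈ ybRels αX βX,
      FreeGroup.lift (fun x => (PresentedGroup.of (h x) : StructureGroup αY βY)) r = 1 := by
    rintro r ⟨x, y, rfl⟩
    have key : (PresentedGroup.mk (ybRels αY βY)) (FreeGroup.of (h x) * FreeGroup.of (h y) *
        (FreeGroup.of (αY (h x) (h y)) * FreeGroup.of (βY (h y) (h x)))⁻¹) = 1 :=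
      PresentedGroup.one_of_mem ⟨h x, h y, rfl⟩
    rw [hα, hβ] at key
    simp only [map_mul, map_inv] at key
    simp only [map_mul, map_inv, FreeGroup.lift_apply_of]
    exact key
  have relA : ∀ r ∈ derivedRels αX βX αXinv,
      FreeGroup.lift (fun x => (PresentedGroup.of (h x) : DerivedGroup αY βY αYinv)) r = 1 := by
    rintro r ⟨x, y, rfl⟩
    have key : (PresentedGroup.mk (derivedRels αY βY αYinv))
        (FreeGroup.of (h x) * FreeGroup.of (h y) *
        (FreeGroup.of (h y) *
          FreeGroup.of (αY (h y) (βY (αYinv (h x) (h y)) (h x))))⁻¹) = 1 :=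
      PresentedGroup.one_of_mem ⟨h x, h y, rfl⟩
    rw [hαi, hβ, hα] at key
    simp only [map_mul, map_inv] at key
    simp only [map_mul, map_inv, FreeGroup.lift_apply_of]
    exact key
  obtain ⟨hG, hG1⟩ : ∃ hG : StructureGroup αX βX →* StructureGroup αY βY,
      ∀ x : X, hG (PresentedGroup.of x) = PresentedGroup.of (h x) :=
    ⟨PresentedGroup.toGroup relG, fun x => PresentedGroup.toGroup.of relG⟩
  obtain ⟨hA, hA1⟩ : ∃ hA : DerivedGroup αX βX αXinv →* DerivedGroup αY βY αYinv,
      ∀ x : X, hA (PresentedGroup.of x) = PresentedGroup.of (h x) :=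
    ⟨PresentedGroup.toGroup relA, fun x => PresentedGroup.toGroup.of relA⟩
  have ind : ∀ P : StructureGroup αX βX → Prop, (∀ x, P (PresentedGroup.of x)) → P 1 →
      (∀ a b, P a → P b → P (a * b)) → (∀ a, P a → P a⁻¹) → ∀ g, P g := by
    intro P h0 h1 h2 h3 g
    have hg : g ∈ Subgroup.closure (Set.range (PresentedGroup.of (rels := ybRels αX βX))) := by
      rw [PresentedGroup.closure_range_of]; trivial
    induction hg using Subgroup.closure_induction with
    | mem x hx => obtain ⟨y, rfl⟩ := hx; exact h0 y
    | one => exact h1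
    | mul a b _ _ ha hb => exact h2 a b ha hb
    | inv a _ ha => exact h3 a ha
  have hequi : ∀ (g : StructureGroup αX βX) (a : DerivedGroup αX βX αXinv),
        hA (ΘX g a) = ΘY (hG g) (hA a) := by
    apply ind
    · intro x a
      have : hA.comp (ΘX (PresentedGroup.of x)).toMonoidHom =
          (ΘY (hG (PresentedGroup.of x))).toMonoidHom.comp hA := by
        apply PresentedGroup.ext
        intro y
        change hA (ΘX (PresentedGroup.of x) (PresentedGroup.of y)) =
          ΘY (hG (PresentedGroup.of x)) (hA (PresentedGroup.of y))
        rw [hΘX, hA1, hA1, hG1, hΘY, hα]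
      exact DFunLike.congr_fun this a
    · intro a; simp
    · intro g k hg hk a
      rw [map_mul, map_mul, map_mul, MulAut.mul_apply, MulAut.mul_apply, hg, hk]
    · intro g hg a
      have := hg (ΘX g⁻¹ a)
      rw [map_inv, MulAut.apply_inv_self] at this
      rw [map_inv, map_inv, map_inv, this, MulAut.inv_apply_self]
  have bX1 : bX 1 = 1 := by
    have := hbX2 1 1
    simpa using this
  have bY1 : bY 1 = 1 := by
    have := hbY2 1 1
    simpa using this
  refine ⟨hG, hA, hG1, hA1, hequi, ?_⟩
  apply ind
  · intro x; rw [hbX1, hA1, hG1, hbY1]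
  · rw [bX1, map_one, map_one, bY1]
  · intro a b ha hb
    rw [hbX2, map_mul, map_mul, hbY2, hequi, ha, hb]
  · intro g hg
    have e1 := hbX2 g⁻¹ g
    have e2 := hbY2 (hG g)⁻¹ (hG g)
    rw [inv_mul_cancel, bX1] at e1
    rw [inv_mul_cancel, bY1] at e2
    rw [eq_inv_of_mul_eq_one_left e1.symm, map_inv hG, eq_inv_of_mul_eq_one_left e2.symm,
      map_inv hA, hequi, hg, map_inv hG]
end

section
/- Let R_X and R_Y be injective non-degenerate YBE solutions on sets X and Y, with structure groups G_X, G_Y, derived structure groups A_X, A_Y, and associated affine actions (Θ^X, b^X) and (Θ^Y, b^Y). Then R_X and R_Y are YB-isomorphic (there exists a bijection h : X → Y with R_Y ∘ (h × h) = (h × h) ∘ R_X) if and only if there exist a group isomorphism φ : G_X → G_Y with φ(ι_G(X)) = ι_G(Y) and a group isomorphism ψ : A_X → A_Y such that ψ(Θ^X(g)(a)) = Θ^Y(φ(g))(ψ(a)) and ψ(b^X(g)) = b^Y(φ(g)) for all g ∈ G_X and a ∈ A_X (i.e., the affine actions ρ^X and ρ^Y ∘ φ are conjugate via ψ). -/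
theorem aux_rel {X : Type*} (α β : X → X → X) (x y : X) :
    (PresentedGroup.of x * PresentedGroup.of y : StructureGroup α β) =
      PresentedGroup.of (α x y) * PresentedGroup.of (β y x) := by
  have h : PresentedGroup.mk (ybRels α β) (FreeGroup.of x * FreeGroup.of y *
        (FreeGroup.of (α x y) * FreeGroup.of (β y x))⁻¹) = 1 :=
    PresentedGroup.one_of_mem ⟨x, y, rfl⟩
  rw [map_mul, map_inv, mul_inv_eq_one, map_mul, map_mul] at h
  exact h

theorem aux_relA {X : Type*} (α β αinv : X → X → X) (x y : X) :
    (PresentedGroup.of x * PresentedGroup.of y : DerivedGroup α β αinv) =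
      PresentedGroup.of y * PresentedGroup.of (α y (β (αinv x y) x)) := by
  have h : PresentedGroup.mk (derivedRels α β αinv) (FreeGroup.of x * FreeGroup.of y *
        (FreeGroup.of y * FreeGroup.of (α y (β (αinv x y) x)))⁻¹) = 1 :=
    PresentedGroup.one_of_mem ⟨x, y, rfl⟩
  rw [map_mul, map_inv, mul_inv_eq_one, map_mul, map_mul] at h
  exact h

theorem aux_homG {X Y : Type*} (α β : X → X → X) (α' β' : Y → Y → Y) (h : X → Y)
    (hα : ∀ x y, h (α x y) = α' (h x) (h y)) (hβ : ∀ x y, h (β x y) = β' (h x) (h y)) :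
    ∃ f : StructureGroup α β →* StructureGroup α' β',
      ∀ x, f (PresentedGroup.of x) = PresentedGroup.of (h x) := by
  refine ⟨PresentedGroup.toGroup (f := fun x => PresentedGroup.of (h x)) ?_, fun x => PresentedGroup.toGroup.of _⟩
  rintro r ⟨x, y, rfl⟩
  simp only [map_mul, map_inv, FreeGroup.lift_apply_of]
  rw [mul_inv_eq_one, hα, hβ, aux_rel]

theorem aux_homA {X Y : Type*} (α β αi : X → X → X) (α' β' αi' : Y → Y → Y) (h : X → Y)
    (hα : ∀ x y, h (α x y) = α' (h x) (h y)) (hβ : ∀ x y, h (β x y) = β' (h x) (h y))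
    (hαi : ∀ x y, h (αi x y) = αi' (h x) (h y)) :
    ∃ f : DerivedGroup α β αi →* DerivedGroup α' β' αi',
      ∀ x, f (PresentedGroup.of x) = PresentedGroup.of (h x) := by
  refine ⟨PresentedGroup.toGroup (f := fun x => PresentedGroup.of (h x)) ?_, fun x => PresentedGroup.toGroup.of _⟩
  rintro r ⟨x, y, rfl⟩
  simp only [map_mul, map_inv, FreeGroup.lift_apply_of]
  rw [mul_inv_eq_one, hα, hβ, hαi, aux_relA]

theorem aux_equiv {X Y : Type*} {r : Set (FreeGroup X)} {s : Set (FreeGroup Y)} (e : X ≃ Y)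
    (f : PresentedGroup r →* PresentedGroup s) (g : PresentedGroup s →* PresentedGroup r)
    (hf : ∀ x, f (PresentedGroup.of x) = PresentedGroup.of (e x))
    (hg : ∀ x, g (PresentedGroup.of x) = PresentedGroup.of (e.symm x)) :
    ∃ F : PresentedGroup r ≃* PresentedGroup s,
      ∀ x, F (PresentedGroup.of x) = PresentedGroup.of (e x) := by
  refine ⟨MonoidHom.toMulEquiv f g ?_ ?_, hf⟩
  · exact PresentedGroup.ext fun x => by simp [hf, hg]
  · exact PresentedGroup.ext fun x => by simp [hf, hg]

theorem stmt14 {X Y : Type*}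
    (αX βX αXinv : X → X → X) (αY βY αYinv : Y → Y → Y)
    (hbijX : Function.Bijective (YBEform αX βX))
    (hYBX : IsBraided (YBEform αX βX))
    (hαX : ∀ x, Function.Bijective (αX x)) (hβX : ∀ x, Function.Bijective (βX x))
    (hinvX : ∀ x, Function.LeftInverse (αXinv x) (αX x) ∧
      Function.RightInverse (αXinv x) (αX x))
    (hinjX : Function.Injective
      (fun x : X => (PresentedGroup.of x : StructureGroup αX βX)))
    (hbijY : Function.Bijective (YBEform αY βY))
    (hYBY : IsBraided (YBEform αY βY))
    (hαY : ∀ y, Function.Bijective (αY y)) (hβY : ∀ y, Function.Bijective (βY y))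
    (hinvY : ∀ y, Function.LeftInverse (αYinv y) (αY y) ∧
      Function.RightInverse (αYinv y) (αY y))
    (hinjY : Function.Injective
      (fun y : Y => (PresentedGroup.of y : StructureGroup αY βY)))
    (ΘX : StructureGroup αX βX →* MulAut (DerivedGroup αX βX αXinv))
    (hΘX : ∀ x y : X, ΘX (PresentedGroup.of x) (PresentedGroup.of y) =
      PresentedGroup.of (αX x y))
    (bX : StructureGroup αX βX → DerivedGroup αX βX αXinv)
    (hbX1 : ∀ x : X, bX (PresentedGroup.of x) = PresentedGroup.of x)
    (hbX2 : ∀ g h, bX (g * h) = bX g * ΘX g (bX h))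
    (hbX3 : Function.Bijective bX)
    (ΘY : StructureGroup αY βY →* MulAut (DerivedGroup αY βY αYinv))
    (hΘY : ∀ x y : Y, ΘY (PresentedGroup.of x) (PresentedGroup.of y) =
      PresentedGroup.of (αY x y))
    (bY : StructureGroup αY βY → DerivedGroup αY βY αYinv)
    (hbY1 : ∀ y : Y, bY (PresentedGroup.of y) = PresentedGroup.of y)
    (hbY2 : ∀ g h, bY (g * h) = bY g * ΘY g (bY h))
    (hbY3 : Function.Bijective bY) :
    (∃ h : X → Y, Function.Bijective h ∧
        YBEform αY βY ∘ Prod.map h h = Prod.map h h ∘ YBEform αX βX) ↔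
    (∃ (φ : StructureGroup αX βX ≃* StructureGroup αY βY)
        (ψ : DerivedGroup αX βX αXinv ≃* DerivedGroup αY βY αYinv),
        ⇑φ '' (Set.range fun x : X => (PresentedGroup.of x : StructureGroup αX βX)) =
          (Set.range fun y : Y => (PresentedGroup.of y : StructureGroup αY βY)) ∧
        (∀ (g : StructureGroup αX βX) (a : DerivedGroup αX βX αXinv),
          ψ (ΘX g a) = ΘY (φ g) (ψ a)) ∧
        (∀ g : StructureGroup αX βX, ψ (bX g) = bY (φ g))) := by
  constructor
  · rintro ⟨h, hb, hR⟩
    have hα : ∀ x y, h (αX x y) = αY (h x) (h y) := fun x y =>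
      (congrArg Prod.fst (congrFun hR (x, y))).symm
    have hβ : ∀ x y, h (βX x y) = βY (h x) (h y) := fun x y =>
      (congrArg Prod.snd (congrFun hR (y, x))).symm
    have hαi : ∀ x y, h (αXinv x y) = αYinv (h x) (h y) := fun x y => by
      apply (hαY (h x)).1
      rw [← hα, (hinvX x).2, (hinvY (h x)).2]
    let e := Equiv.ofBijective h hb
    have he : ∀ x, e x = h x := fun x => rfl
    have inv2 : ∀ (u : X → X → X) (v : Y → Y → Y), (∀ x y, h (u x y) = v (h x) (h y)) →
        ∀ x y, e.symm (v x y) = u (e.symm x) (e.symm y) := by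
      intro u v huv x y
      rw [Equiv.symm_apply_eq, he, huv, ← he, ← he, e.apply_symm_apply, e.apply_symm_apply]
    obtain ⟨f, hf⟩ := aux_homG αX βX αY βY h hα hβ
    obtain ⟨g, hg⟩ := aux_homG αY βY αX βX e.symm (inv2 _ _ hα) (inv2 _ _ hβ)
    obtain ⟨f', hf'⟩ := aux_homA αX βX αXinv αY βY αYinv h hα hβ hαi
    obtain ⟨g', hg'⟩ := aux_homA αY βY αYinv αX βX αXinv e.symm (inv2 _ _ hα) (inv2 _ _ hβ)
      (inv2 _ _ hαi)
    obtain ⟨φ, hφ⟩ := aux_equiv e f g hf hg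
    obtain ⟨ψ, hψ⟩ := aux_equiv e f' g' hf' hg'
    have hΘ : ∀ (g : StructureGroup αX βX) (a : DerivedGroup αX βX αXinv),
          ψ (ΘX g a) = ΘY (φ g) (ψ a) := by
      have key : (MulAut.congr ψ).toMonoidHom.comp ΘX = ΘY.comp φ.toMonoidHom := by
        refine PresentedGroup.ext fun x => ?_
        have k2 : (ψ.toMonoidHom.comp (ΘX (PresentedGroup.of x)).toMonoidHom) =
            (ΘY (PresentedGroup.of (h x))).toMonoidHom.comp ψ.toMonoidHom := by
          refine PresentedGroup.ext fun y => ?_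
          simp [hΘX, hψ, hΘY, he, hα]
        refine MulEquiv.ext fun a => ?_
        have := DFunLike.congr_fun k2 (ψ.symm a)
        simpa [hφ, he] using this
      intro g a
      have := DFunLike.congr_fun (DFunLike.congr_fun key g) (ψ a)
      simpa using this
    refine ⟨φ, ψ, ?_, hΘ, ?_⟩
    · ext z
      constructor
      · rintro ⟨_, ⟨x, rfl⟩, rfl⟩
        exact ⟨h x, (hφ x).symm⟩
      · rintro ⟨y, rfl⟩
        obtain ⟨x, rfl⟩ := hb.2 y
        exact ⟨_, ⟨x, rfl⟩, hφ x⟩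
    · have h1X : bX 1 = 1 := by simpa using hbX2 1 1
      have h1Y : bY 1 = 1 := by simpa using hbY2 1 1
      intro g
      have hg : g ∈ Subgroup.closure (Set.range
          (PresentedGroup.of : X → StructureGroup αX βX)) := by
        rw [PresentedGroup.closure_range_of]; trivial
      induction hg using Subgroup.closure_induction with
      | mem x hx =>
        obtain ⟨x, rfl⟩ := hx
        rw [hbX1, hφ, hψ, hbY1]
      | one => rw [h1X, map_one, map_one, h1Y]
      | mul x y _ _ ihx ihy => rw [hbX2, map_mul, map_mul, hbY2, hΘ, ihx, ihy]
      | inv x _ ih =>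
        have a1 := congrArg ψ (hbX2 x x⁻¹)
        have a2 := hbY2 (φ x) (φ x⁻¹)
        rw [mul_inv_cancel, h1X, map_one, map_mul, hΘ, ih] at a1
        rw [← map_mul, mul_inv_cancel, map_one, h1Y] at a2
        exact (ΘY (φ x)).injective (mul_left_cancel (a1.symm.trans a2))
  · rintro ⟨φ, ψ, him, hΘ, hb⟩
    have ex : ∀ x : X, ∃ y : Y, φ (PresentedGroup.of x) = PresentedGroup.of y := by
      intro x
      have : φ (PresentedGroup.of x) ∈ 
          (Set.range fun y : Y => (PresentedGroup.of y : StructureGroup αY βY)) := by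
        rw [← him]; exact ⟨_, ⟨x, rfl⟩, rfl⟩
      obtain ⟨y, hy⟩ := this
      exact ⟨y, hy.symm⟩
    choose h hφ using ex
    have hψ : ∀ x, ψ (PresentedGroup.of x) = PresentedGroup.of (h x) := fun x => by
      rw [← hbX1, hb, hφ, hbY1]
    have injA : ∀ y y' : Y, (PresentedGroup.of y : DerivedGroup αY βY αYinv) =
        PresentedGroup.of y' → y = y' := by
      intro y y' hy
      rw [← hbY1, ← hbY1] at hy
      exact hinjY (hbY3.1 hy)
    have hα : ∀ x y, αY (h x) (h y) = h (αX x y) := by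
      intro x y
      apply injA
      rw [← hΘY, ← hφ, ← hψ, ← hψ, ← hΘ, hΘX]
    have hβ : ∀ x y, βY (h y) (h x) = h (βX y x) := by
      intro x y
      apply hinjY
      have h1 := congrArg φ (aux_rel αX βX x y)
      rw [map_mul, map_mul, hφ, hφ, hφ, hφ, aux_rel, hα] at h1
      exact mul_left_cancel h1
    refine ⟨h, ⟨?_, ?_⟩, ?_⟩
    · intro x x' hx
      apply hinjX
      apply φ.injective
      simp only [hφ, hx]
    · intro y
      have : (PresentedGroup.of y : StructureGroup αY βY) ∈
          ⇑φ '' (Set.range fun x : X => (PresentedGroup.of x : StructureGroup αX βX)) := by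
        rw [him]; exact ⟨y, rfl⟩
      obtain ⟨_, ⟨x, rfl⟩, hx⟩ := this
      exact ⟨x, hinjY ((hφ x).symm.trans hx)⟩
    · funext ⟨x, y⟩
      exact Prod.ext (hα x y) (hβ x y)
end

section
/- Let R(x,y) = (α_x(y), β_y(x)) be a symmetric YBE solution on a set X, and define x·y := β_x⁻¹(y). Then R(β_y⁻¹(x), y) = (β_x⁻¹(y), x) for all x, y ∈ X; consequently the structure group G_R is isomorphic, by a group isomorphism sending each generator x ∈ X to ι_G x, to the presented group with generating set X and relations (y·x)·y = (x·y)·x for all x, y ∈ X. -/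
/-- The relators `(y·x)·y = (x·y)·x` associated to the binary operation `x·y = c x y`. -/
def cycleRels {X : Type*} (c : X → X → X) : Set (FreeGroup X) :=
  {r | ∃ x y : X, r = FreeGroup.of (c y x) * FreeGroup.of y *
        (FreeGroup.of (c x y) * FreeGroup.of x)⁻¹}

theorem presentedGroup_congr_aux {X : Type*} {r s : Set (FreeGroup X)} (h : r = s) :
    ∃ Φ : PresentedGroup r ≃* PresentedGroup s,
      ∀ x : X, Φ (PresentedGroup.of x) = PresentedGroup.of x := by
  subst h
  exact ⟨MulEquiv.refl _, fun _ => rfl⟩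

theorem stmt16 {X : Type*} (α β βinv : X → X → X)
    (hbij : Function.Bijective (YBEform α β))
    (hYB : IsBraided (YBEform α β))
    (hα : ∀ x, Function.Bijective (α x)) (hβ : ∀ x, Function.Bijective (β x))
    (hinvol : YBEform α β ∘ YBEform α β = id)
    (hβinv : ∀ x, Function.LeftInverse (βinv x) (β x) ∧
      Function.RightInverse (βinv x) (β x)) :
    (∀ x y : X, YBEform α β (βinv y x, y) = (βinv x y, x)) ∧
    ∃ Φ : PresentedGroup (cycleRels βinv) ≃* StructureGroup α β,
      ∀ x : X, Φ (PresentedGroup.of x) = PresentedGroup.of x := by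
  have key : ∀ x y : X, YBEform α β (βinv y x, y) = (βinv x y, x) := by
    intro x y
    have h1 : β y (βinv y x) = x := (hβinv y).2 x
    have h2 := congrFun hinvol (βinv y x, y)
    simp only [YBEform, Function.comp, id, h1, Prod.mk.injEq] at h2
    have h3 : βinv x y = α (βinv y x) y := by
      conv_lhs => rw [← h2.2]
      exact (hβinv x).1 _
    simp only [YBEform, h1, h3]
  refine ⟨key, presentedGroup_congr_aux ?_⟩
  have key1 : ∀ x y : X, α (βinv y x) y = βinv x y := fun x y => congrArg Prod.fst (key x y)
  ext r
  constructor
  · rintro ⟨x, y, rfl⟩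
    refine ⟨βinv y x, y, ?_⟩
    rw [key1, (hβinv y).2 x]
  · rintro ⟨x, y, rfl⟩
    refine ⟨β y x, y, ?_⟩
    rw [← key1 (β y x) y, (hβinv y).1 x]
end

section
/- Let X and S be cycle sets, let π be an action of X on S, and write R_X(x,y) = (α_x(y), β_y(x)) and R_S(s,t) = (α̃_s(t), β̃_t(s)) for the associated maps of X and S. Then every left multiplication ℓ_{(x,s)} of the semidirect product X ⋉_π S is bijective, and the associated map of X ⋉_π S satisfies R_{X⋉_πS}((x,s),(y,t)) = ((α_x(y), α̃_s(π_x(t))), (β_y(x), π_{α_x(y)}⁻¹(β̃_{π_x(t)}(s)))) for all x, y ∈ X and s, t ∈ S. -/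
/-- The semidirect product operation on `X × S`:
`(x,s)·(y,t) = (x·y, π_{x·y}(s)·π_{y·x}(t))`. -/
def sdOp {X S : Type*} (cX : X → X → X) (cS : S → S → S) (p : X → S → S) :
    X × S → X × S → X × S :=
  fun q r => (cX q.1 r.1, cS (p (cX q.1 r.1) q.2) (p (cX r.1 q.1) r.2))

theorem stmt17 {X S : Type*} (cX cXinv : X → X → X) (cS cSinv : S → S → S)
    (p pinv : X → S → S)
    (hXbij : ∀ x, Function.Bijective (cX x))
    (hXinv : ∀ x, Function.LeftInverse (cXinv x) (cX x) ∧
      Function.RightInverse (cXinv x) (cX x))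
    (hXcycle : ∀ x y z, cX (cX x y) (cX x z) = cX (cX y x) (cX y z))
    (hSbij : ∀ s, Function.Bijective (cS s))
    (hSinv : ∀ s, Function.LeftInverse (cSinv s) (cS s) ∧
      Function.RightInverse (cSinv s) (cS s))
    (hScycle : ∀ s t u, cS (cS s t) (cS s u) = cS (cS t s) (cS t u))
    (hpbij : ∀ x, Function.Bijective (p x))
    (hpinv : ∀ x, Function.LeftInverse (pinv x) (p x) ∧
      Function.RightInverse (pinv x) (p x))
    (hpmor : ∀ x s t, p x (cS s t) = cS (p x s) (p x t))
    (hpact : ∀ x y s, p (cX y x) (p y s) = p (cX x y) (p x s)) :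
    (∀ q : X × S, Function.Bijective (sdOp cX cS p q)) ∧
    (∀ (x y : X) (s t : S),
      sdOp cX cS p (y, t)
        (cXinv y x, pinv (cX (cXinv y x) y) (cSinv (p x t) s)) = (x, s) ∧
      sdOp cX cS p (cXinv y x, pinv (cX (cXinv y x) y) (cSinv (p x t) s)) (y, t) =
        (cX (cXinv y x) y, cS (cSinv (p x t) s) (p x t))) := by
  have hX : ∀ y x, cX y (cXinv y x) = x := fun y x => (hXinv y).2 x
  have hS : ∀ y x, cS y (cSinv y x) = x := fun y x => (hSinv y).2 x
  have hp : ∀ y x, p y (pinv y x) = x := fun y x => (hpinv y).2 x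
  have key : ∀ (x y : X) (s t : S),
      sdOp cX cS p (y, t)
        (cXinv y x, pinv (cX (cXinv y x) y) (cSinv (p x t) s)) = (x, s) := by
    intro x y s t
    simp only [sdOp, hX, hp, hS]
  refine ⟨?_, fun x y s t => ⟨key x y s t, ?_⟩⟩
  · rintro ⟨y, t⟩
    constructor
    · rintro ⟨a, s⟩ ⟨b, u⟩ h
      simp only [sdOp, Prod.mk.injEq] at h
      obtain ⟨h1, h2⟩ := h
      have hab := (hXbij y).1 h1
      subst hab
      rw [(hpbij _).1 ((hSbij _).1 h2)]
    · rintro ⟨x, s⟩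
      exact ⟨_, key x y s t⟩
  · simp only [sdOp, hX, hp]
end

section
/- Let X and S be non-degenerate cycle sets, let π be an action of X on S, and let R_X and R_S be the associated symmetric YBE solutions on X and S, with structure groups G_{R_X} and G_{R_S}. Then there exists a group homomorphism π̂ : G_{R_X} → Aut(G_{R_S}) such that π̂(ι_G x)(ι_G s) = ι_G(π_x(s)) for all x ∈ X and s ∈ S; that is, π extends to an action of G_{R_X} on G_{R_S} by group automorphisms. -/
theorem sg_rel_s18 {S : Type*} (c ci : S → S → S)
    (hi : ∀ s, Function.LeftInverse (ci s) (c s)) (t u : S) :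
    (PresentedGroup.of (c t u) * PresentedGroup.of t :
      StructureGroup (fun s t => c (ci t s) t) ci) =
      PresentedGroup.of (c u t) * PresentedGroup.of u := by
  have h := PresentedGroup.one_of_mem (rels := ybRels (fun s t => c (ci t s) t) ci)
    (x := FreeGroup.of (c t u) * FreeGroup.of t *
      (FreeGroup.of (c u t) * FreeGroup.of u)⁻¹)
    ⟨c t u, t, by simp only [hi t u]⟩
  rw [map_mul, map_inv, mul_inv_eq_one, map_mul, map_mul] at h
  exact h

theorem sg_lift_s18 {S G : Type*} [Group G] (c ci : S → S → S)
    (hi : ∀ s, Function.RightInverse (ci s) (c s)) (f : S → G)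
    (hf : ∀ t u, f (c t u) * f t = f (c u t) * f u) :
    ∃ φ : StructureGroup (fun s t => c (ci t s) t) ci →* G,
      ∀ s, φ (PresentedGroup.of s) = f s := by
  refine ⟨PresentedGroup.toGroup (f := f) ?_, fun s => PresentedGroup.toGroup.of _⟩
  rintro r ⟨x, y, rfl⟩
  have := hf y (ci y x)
  rw [hi y x] at this
  simp [this]

theorem sg_aut {S : Type*} (c ci : S → S → S)
    (hl : ∀ s, Function.LeftInverse (ci s) (c s))
    (hr : ∀ s, Function.RightInverse (ci s) (c s)) (f : S → S)
    (hf : ∀ s t, f (c s t) = c (f s) (f t)) (hb : Function.Bijective f) :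
    ∃ φ : MulAut (StructureGroup (fun s t => c (ci t s) t) ci),
      ∀ s, φ (PresentedGroup.of s) = PresentedGroup.of (f s) := by
  obtain ⟨g, hgl, hgr⟩ := Function.bijective_iff_has_inverse.1 hb
  have hg : ∀ s t, g (c s t) = c (g s) (g t) := fun s t => hb.1 (by
    rw [hgr, hf, hgr, hgr])
  obtain ⟨F, hF⟩ := sg_lift_s18 c ci hr
    (fun s => (PresentedGroup.of (f s) : StructureGroup (fun s t => c (ci t s) t) ci))
    (fun t u => by simp only [hf]; exact sg_rel_s18 c ci hl _ _)
  obtain ⟨G, hG⟩ := sg_lift_s18 c ci hr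
    (fun s => (PresentedGroup.of (g s) : StructureGroup (fun s t => c (ci t s) t) ci))
    (fun t u => by simp only [hg]; exact sg_rel_s18 c ci hl _ _)
  refine ⟨MonoidHom.toMulEquiv F G ?_ ?_, hF⟩
  · apply PresentedGroup.ext
    intro s
    simp [hF, hG, hgl s]
  · apply PresentedGroup.ext
    intro s
    simp [hF, hG, hgr s]

theorem stmt18 {X S : Type*} (cX cXinv : X → X → X) (cS cSinv : S → S → S)
    (p : X → S → S)
    (hXbij : ∀ x, Function.Bijective (cX x))
    (hXinv : ∀ x, Function.LeftInverse (cXinv x) (cX x) ∧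
      Function.RightInverse (cXinv x) (cX x))
    (hXcycle : ∀ x y z, cX (cX x y) (cX x z) = cX (cX y x) (cX y z))
    (hXnd : Function.Bijective fun x : X => cX x x)
    (hSbij : ∀ s, Function.Bijective (cS s))
    (hSinv : ∀ s, Function.LeftInverse (cSinv s) (cS s) ∧
      Function.RightInverse (cSinv s) (cS s))
    (hScycle : ∀ s t u, cS (cS s t) (cS s u) = cS (cS t s) (cS t u))
    (hSnd : Function.Bijective fun s : S => cS s s)
    (hpbij : ∀ x, Function.Bijective (p x))
    (hpmor : ∀ x s t, p x (cS s t) = cS (p x s) (p x t))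
    (hpact : ∀ x y s, p (cX y x) (p y s) = p (cX x y) (p x s)) :
    ∃ πhat : StructureGroup (fun x y => cX (cXinv y x) y) cXinv →*
        MulAut (StructureGroup (fun s t => cS (cSinv t s) t) cSinv),
      ∀ (x : X) (s : S),
        πhat (PresentedGroup.of x) (PresentedGroup.of s) =
          PresentedGroup.of (p x s) := by
  choose φ hφ using fun x => sg_aut cS cSinv (fun s => (hSinv s).1) (fun s => (hSinv s).2)
    (p x) (hpmor x) (hpbij x)
  obtain ⟨P, hP⟩ := sg_lift_s18 cX cXinv (fun s => (hXinv s).2) φ (by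
    intro t u
    apply MulEquiv.toMonoidHom_injective
    apply PresentedGroup.ext
    intro s
    change φ (cX t u) (φ t _) = φ (cX u t) (φ u _)
    rw [hφ, hφ, hφ, hφ, hpact])
  exact ⟨P, fun x s => by rw [hP, hφ]⟩
end

section
/- Let X and S be non-degenerate cycle sets, let π be an action of X on S, and let X ⋉_π S be the semidirect product cycle set with associated map R_{X⋉_πS} and structure group G_{R_{X⋉_πS}}. Let π̂ : G_{R_X} → Aut(G_{R_S}) be a group homomorphism with π̂(ι_G x)(ι_G s) = ι_G(π_x(s)) for all x ∈ X and s ∈ S, and form the semidirect product group G_{R_X} ⋉_{π̂} G_{R_S} (with multiplication (g,h)(g',h') = (gg', h·π̂(g)(h'))). Then there exists a group homomorphism Π : G_{R_{X⋉_πS}} → G_{R_X} ⋉_{π̂} G_{R_S} with Π(ι_G(x,s)) = (ι_G x, ι_G s) for all x ∈ X and s ∈ S. -/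
theorem stmt19 {X S : Type*} (cX cXinv : X → X → X) (cS cSinv : S → S → S)
    (p : X → S → S) (minv : X × S → X × S → X × S)
    (hXbij : ∀ x, Function.Bijective (cX x))
    (hXinv : ∀ x, Function.LeftInverse (cXinv x) (cX x) ∧
      Function.RightInverse (cXinv x) (cX x))
    (hXcycle : ∀ x y z, cX (cX x y) (cX x z) = cX (cX y x) (cX y z))
    (hXnd : Function.Bijective fun x : X => cX x x)
    (hSbij : ∀ s, Function.Bijective (cS s))
    (hSinv : ∀ s, Function.LeftInverse (cSinv s) (cS s) ∧
      Function.RightInverse (cSinv s) (cS s))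
    (hScycle : ∀ s t u, cS (cS s t) (cS s u) = cS (cS t s) (cS t u))
    (hSnd : Function.Bijective fun s : S => cS s s)
    (hpbij : ∀ x, Function.Bijective (p x))
    (hpmor : ∀ x s t, p x (cS s t) = cS (p x s) (p x t))
    (hpact : ∀ x y s, p (cX y x) (p y s) = p (cX x y) (p x s))
    (hminv : ∀ q : X × S, Function.LeftInverse (minv q) (sdOp cX cS p q) ∧
      Function.RightInverse (minv q) (sdOp cX cS p q))
    (πhat : StructureGroup (fun x y => cX (cXinv y x) y) cXinv →*
      MulAut (StructureGroup (fun s t => cS (cSinv t s) t) cSinv))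
    (hπhat : ∀ (x : X) (s : S),
      πhat (PresentedGroup.of x) (PresentedGroup.of s) =
        PresentedGroup.of (p x s)) :
    ∃ Pihom : StructureGroup (fun q r : X × S => sdOp cX cS p (minv r q) r)
        (fun r q : X × S => minv r q) →*
        SemidirectProduct (StructureGroup (fun s t => cS (cSinv t s) t) cSinv)
          (StructureGroup (fun x y => cX (cXinv y x) y) cXinv) πhat,
      ∀ (x : X) (s : S),
        Pihom (PresentedGroup.of (x, s)) =
          SemidirectProduct.inl (PresentedGroup.of s) *
            SemidirectProduct.inr (PresentedGroup.of x) := by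
  have key : ∀ {Y : Type _} (c ci : Y → Y → Y)
      (_ : ∀ y, Function.LeftInverse (ci y) (c y)) (a b : Y),
      (PresentedGroup.of (c a b) * PresentedGroup.of a :
        StructureGroup (fun s t => c (ci t s) t) ci) =
      PresentedGroup.of (c b a) * PresentedGroup.of b := by
    intro Y c ci h a b
    have h1 : (PresentedGroup.mk (ybRels (fun s t => c (ci t s) t) ci))
        (FreeGroup.of (c a b) * FreeGroup.of a *
        (FreeGroup.of (c b a) * FreeGroup.of b)⁻¹) = 1 := by
      apply PresentedGroup.one_of_mem
      refine ⟨c a b, a, ?_⟩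
      simp only [h a b]
    rw [map_mul, map_inv, mul_inv_eq_one, map_mul, map_mul] at h1
    exact h1
  have keyX := key cX cXinv (fun y => (hXinv y).1)
  clear key
  have key : ∀ {Y : Type _} (c ci : Y → Y → Y)
      (_ : ∀ y, Function.LeftInverse (ci y) (c y)) (a b : Y),
      (PresentedGroup.of (c a b) * PresentedGroup.of a :
        StructureGroup (fun s t => c (ci t s) t) ci) =
      PresentedGroup.of (c b a) * PresentedGroup.of b := by
    intro Y c ci h a b
    have h1 : (PresentedGroup.mk (ybRels (fun s t => c (ci t s) t) ci))
        (FreeGroup.of (c a b) * FreeGroup.of a *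
        (FreeGroup.of (c b a) * FreeGroup.of b)⁻¹) = 1 := by
      apply PresentedGroup.one_of_mem
      refine ⟨c a b, a, ?_⟩
      simp only [h a b]
    rw [map_mul, map_inv, mul_inv_eq_one, map_mul, map_mul] at h1
    exact h1
  have keyS := key cS cSinv (fun y => (hSinv y).1)
  refine ⟨PresentedGroup.toGroup (f := fun q : X × S =>
    SemidirectProduct.inl (PresentedGroup.of q.2) *
            SemidirectProduct.inr (PresentedGroup.of q.1)) ?_, ?_⟩
  · rintro _ ⟨q, r, rfl⟩
    obtain ⟨w, rfl⟩ : ∃ w, q = sdOp cX cS p r w := ⟨minv r q, ((hminv r).2 q).symm⟩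
    rw [map_mul, map_inv, mul_inv_eq_one, map_mul, map_mul]
    simp only [(hminv r).1 w, FreeGroup.lift_apply_of]
    obtain ⟨x, s⟩ := r
    obtain ⟨y, t⟩ := w
    ext
    · simp only [sdOp, SemidirectProduct.mul_left, SemidirectProduct.mul_right,
        SemidirectProduct.left_inl, SemidirectProduct.right_inl, SemidirectProduct.left_inr,
        SemidirectProduct.right_inr, map_one, MulAut.one_apply, mul_one, one_mul, hπhat]
      exact keyS _ _
    · simp only [sdOp, SemidirectProduct.mul_right, SemidirectProduct.right_inl,
        SemidirectProduct.right_inr, one_mul]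
      exact keyX _ _
  · intro x s
    exact PresentedGroup.toGroup.of _
end
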